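/- Let V be a finite type, K an abstract simplicial complex on V, and S ⊆ V. The restriction map res : (V → ℂ) → (S → ℂ), res z = z|_S, is continuous, maps Z_K into Z_{K_S}, and satisfies res(ext z) = z for every z ∈ (S → ℂ), where ext is the extension-by-1 map. Consequently Z_{K_S}, embedded into Z_K via ext, is a retract of Z_K: res is a continuous retraction of the embedding ext : Z_{K_S} → Z_K. -/

import Mathlib

open scoped Classical

/-- The moment-angle complex of a simplicial complex `K` on the vertex type `V`, as a
subset of `V → ℂ`. -/
def momentAngleComplex {V : Type*} (K : Set (Finset V)) : Set (V → ℂ) :=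
  {z | ∃ σ ∈ K, (∀ v ∈ σ, ‖z v‖ ≤ 1) ∧ (∀ v ∉ σ, ‖z v‖ = 1)}

/-- The moment-angle complex of the full subcomplex `K_S`, as a subset of `S → ℂ`. -/
def momentAngleComplexSub {V : Type*} (K : Set (Finset V)) (S : Set V) : Set (S → ℂ) :=
  {z | ∃ σ ∈ K, (↑σ : Set V) ⊆ S ∧
    ∀ v : S, ((v : V) ∈ σ → ‖z v‖ ≤ 1) ∧ ((v : V) ∉ σ → ‖z v‖ = 1)}

/-- The extension-by-1 map `ext : (S → ℂ) → (V → ℂ)`. -/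
noncomputable def extMap {V : Type*} (S : Set V) (z : S → ℂ) : V → ℂ :=
  fun v => if h : v ∈ S then z ⟨v, h⟩ else 1

/-- The restriction map `res : (V → ℂ) → (S → ℂ)`, `res z = z|_S`. -/
def resMap {V : Type*} (S : Set V) (z : V → ℂ) : S → ℂ :=
  fun v => z v

open Set Function Topology

section Maps

variable {V : Type*} {S : Set V}

theorem extMap_of_mem {v : V} (hv : v ∈ S) (z : S → ℂ) : extMap S z v = z ⟨v, hv⟩ :=
  dif_pos hv

theorem extMap_of_notMem {v : V} (hv : v ∉ S) (z : S → ℂ) : extMap S z v = 1 :=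
  dif_neg hv

variable (S)

theorem leftInverse_resMap_extMap : LeftInverse (resMap S) (extMap S) :=
  fun z => funext fun v => extMap_of_mem v.2 z

theorem continuous_resMap : Continuous (resMap S) :=
  Pi.continuous_domRestrict S

theorem continuous_extMap : Continuous (extMap S) := by
  refine continuous_pi fun v => ?_
  by_cases hv : v ∈ S
  · simpa only [extMap_of_mem hv] using continuous_apply (⟨v, hv⟩ : S)
  · simpa only [extMap_of_notMem hv] using continuous_const

theorem isEmbedding_extMap : IsEmbedding (extMap S) :=
  (leftInverse_resMap_extMap S).isEmbedding (continuous_resMap S) (continuous_extMap S)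

end Maps

section MomentAngleComplex

variable {V : Type*} {K : Set (Finset V)}

theorem mapsTo_resMap_momentAngleComplex (hK : IsLowerSet K) (S : Set V) :
    MapsTo (resMap S) (momentAngleComplex K) (momentAngleComplexSub K S) := by
  rintro z ⟨σ, hσ, hle, heq⟩
  have hface : {v ∈ σ | v ∈ S} ∈ K := hK (Finset.filter_subset _ σ) hσ
  have hmem (v : S) : (v : V) ∈ ({v ∈ σ | v ∈ S} : Finset V) ↔ (v : V) ∈ σ := by
    simp only [Finset.mem_filter, v.2, and_true]
  exact ⟨_, hface, fun v hv => (Finset.mem_filter.mp hv).2,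
    fun v => ⟨fun hv => hle v ((hmem v).mp hv), fun hv => heq v (mt (hmem v).mpr hv)⟩⟩

variable (K)

theorem mapsTo_extMap_momentAngleComplexSub (S : Set V) :
    MapsTo (extMap S) (momentAngleComplexSub K S) (momentAngleComplex K) := by
  rintro z ⟨σ, hσ, hσS, hz⟩
  refine ⟨σ, hσ, fun v hv => ?_, fun v hv => ?_⟩
  · rw [extMap_of_mem (hσS hv)]
    exact (hz ⟨v, hσS hv⟩).1 hv
  · by_cases hvS : v ∈ S
    · rw [extMap_of_mem hvS]
      exact (hz ⟨v, hvS⟩).2 hv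
    · rw [extMap_of_notMem hvS, norm_one]

end MomentAngleComplex

theorem resMap_retraction_of_full_subcomplex_general {V : Type*} {K : Set (Finset V)}
    (hK : IsLowerSet K) (S : Set V) :
    Continuous (resMap S) ∧
      MapsTo (resMap S) (momentAngleComplex K) (momentAngleComplexSub K S) ∧
      LeftInverse (resMap S) (extMap S) ∧
      IsEmbedding (extMap S) ∧
      MapsTo (extMap S) (momentAngleComplexSub K S) (momentAngleComplex K) :=
  ⟨continuous_resMap S, mapsTo_resMap_momentAngleComplex hK S, leftInverse_resMap_extMap S,
    isEmbedding_extMap S, mapsTo_extMap_momentAngleComplexSub K S⟩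

/-- The restriction map `res : (V → ℂ) → (S → ℂ)` is continuous, maps
`Z_K` into `Z_{K_S}`, and satisfies `res (ext z) = z` for every `z : S → ℂ`.
Consequently `Z_{K_S}`, embedded into `Z_K` via `ext`, is a retract of `Z_K`: `res` is a
continuous retraction of the embedding `ext : Z_{K_S} → Z_K`. -/
theorem resMap_retraction_of_full_subcomplex {V : Type*} [Fintype V]
    (K : Set (Finset V))
    (hdown : ∀ σ ∈ K, ∀ τ ⊆ σ, τ ∈ K)
    (hempty : (∅ : Finset V) ∈ K)
    (hvert : ∀ v : V, ({v} : Finset V) ∈ K)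
    (S : Set V) :
    Continuous (resMap S) ∧
      (∀ z ∈ momentAngleComplex K, resMap S z ∈ momentAngleComplexSub K S) ∧
      (∀ z : S → ℂ, resMap S (extMap S z) = z) := by
  obtain ⟨hcont, hmaps, hleft, -⟩ :=
    resMap_retraction_of_full_subcomplex_general (fun σ τ hτ hσ => hdown σ hσ τ hτ) S
  exact ⟨hcont, hmaps, hleft⟩
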